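/- Let n ≥ 1 and let X_1, …, X_n be {0,1}-valued random variables on a probability space such that for every subset S ⊆ [n], Pr(∀ i ∈ S, X_i = 1) ≤ α^{|S|}. Then for every β with α < β < 1, Pr( (1/n)·∑_{i=1}^n X_i ≥ β ) ≤ exp(−n·D(β‖α)), where D(β‖α) = β·ln(β/α) + (1−β)·ln((1−β)/(1−α)). -/

import Mathlib

open MeasureTheory ProbabilityTheory

/-!
Chernoff's argument uses independence only to bound the moment generating function of `∑ i, X i`.
By convexity `exp (t * x) ≤ 1 + (exp t - 1) * x` on `[0, 1]`, and `∏ i, (1 + (exp t - 1) * X i)`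
is multilinear in the `X i` with nonnegative coefficients when `0 ≤ t`, so upper bounds on the
mixed moments `𝔼[∏ i ∈ S, X i]` can replace independence. For `{0, 1}`-valued variables these
moments are the probabilities that all `X i`, `i ∈ S`, equal `1`.
-/

section BernoulliKL

/-- The binary relative entropy `D(β‖α)`: the Kullback–Leibler divergence of the Bernoulli law of
parameter `β` from that of parameter `α`, in nats. It is the exponent of the Chernoff bound, and
is meant for `α` and `β` in the open interval `(0, 1)`. -/
noncomputable def bernoulliKL (β α : ℝ) : ℝ :=
  β * Real.log (β / α) + (1 - β) * Real.log ((1 - β) / (1 - α))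

/-- The difference of the log-odds of `β` and `α`: the exponential tilt that turns the Bernoulli
law of parameter `α` into the one of parameter `β`. It is the optimal Chernoff parameter. -/
noncomputable def bernoulliTilt (β α : ℝ) : ℝ :=
  Real.log (β / α) - Real.log ((1 - β) / (1 - α))

variable {α β : ℝ}

lemma bernoulliTilt_nonneg (hα : 0 < α) (hαβ : α ≤ β) (hβ : β < 1) : 0 ≤ bernoulliTilt β α := by
  have hodds_one : 0 ≤ Real.log (β / α) := Real.log_nonneg ((one_le_div hα).2 hαβ)
  have hodds_zero : Real.log ((1 - β) / (1 - α)) ≤ 0 :=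
    Real.log_nonpos (div_nonneg (by linarith) (by linarith))
      ((div_le_one (by linarith)).2 (by linarith))
  exact sub_nonneg.2 (hodds_zero.trans hodds_one)

lemma one_add_exp_bernoulliTilt_sub_one_mul (hα₀ : 0 < α) (hα₁ : α < 1) (hβ₀ : 0 < β)
    (hβ₁ : β < 1) :
    1 + (Real.exp (bernoulliTilt β α) - 1) * α = Real.exp (-Real.log ((1 - β) / (1 - α))) := by
  have hα' : 0 < 1 - α := sub_pos.2 hα₁
  have hβ' : 0 < 1 - β := sub_pos.2 hβ₁
  rw [bernoulliTilt, Real.exp_sub, Real.exp_neg, Real.exp_log (div_pos hβ₀ hα₀),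
    Real.exp_log (div_pos hβ' hα')]
  field_simp
  ring

lemma exp_neg_bernoulliTilt_mul_mul_pow (hα₀ : 0 < α) (hα₁ : α < 1) (hβ₀ : 0 < β) (hβ₁ : β < 1)
    (n : ℕ) :
    Real.exp (-bernoulliTilt β α * (n * β)) * (1 + (Real.exp (bernoulliTilt β α) - 1) * α) ^ n =
      Real.exp (-(n : ℝ) * bernoulliKL β α) := by
  rw [one_add_exp_bernoulliTilt_sub_one_mul hα₀ hα₁ hβ₀ hβ₁, ← Real.exp_nat_mul, ← Real.exp_add,
    bernoulliTilt, bernoulliKL]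
  congr 1
  ring

end BernoulliKL

lemma exp_mul_le_one_add_of_mem_Icc (t : ℝ) {x : ℝ} (hx : x ∈ Set.Icc 0 1) :
    Real.exp (t * x) ≤ 1 + (Real.exp t - 1) * x := by
  have hconv := convexOn_exp.2 (Set.mem_univ 0) (Set.mem_univ t) (sub_nonneg.2 hx.2) hx.1
    (sub_add_cancel 1 x)
  simp only [smul_eq_mul, mul_zero, zero_add, Real.exp_zero, mul_one] at hconv
  rw [mul_comm t x]
  linarith

lemma prod_one_add_const_mul {ι R : Type*} [CommSemiring R] (s : Finset ι) (c : R) (f : ι → R) :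
    ∏ i ∈ s, (1 + c * f i) = ∑ S ∈ s.powerset, c ^ S.card * ∏ i ∈ S, f i := by
  simp only [Finset.prod_one_add, Finset.prod_mul_distrib, Finset.prod_const]

section MixedMoments

variable {ι Ω : Type*} [MeasurableSpace Ω] {μ : Measure Ω} {X : ι → Ω → ℝ}

lemma integral_prod_eq_measureReal_forall_eq_one (hmeas : ∀ i, Measurable (X i))
    (hval : ∀ i ω, X i ω = 0 ∨ X i ω = 1) (S : Finset ι) :
    ∫ ω, ∏ i ∈ S, X i ω ∂μ = μ.real {ω | ∀ i ∈ S, X i ω = 1} := by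
  have hset : {ω | ∀ i ∈ S, X i ω = 1} = ⋂ i ∈ S, X i ⁻¹' {1} := by
    ext ω
    simp only [Set.mem_ofPred_eq, Set.mem_iInter, Set.mem_preimage, Set.mem_singleton_iff]
  have hX : ∀ i ω, X i ω = (X i ⁻¹' {1}).indicator 1 ω := fun i ω => by
    rcases hval i ω with h | h <;> simp [Set.indicator, h]
  have hprod : ∀ ω, ∏ i ∈ S, X i ω = (⋂ i ∈ S, X i ⁻¹' {1}).indicator 1 ω := fun ω => by
    rw [Finset.prod_congr rfl fun i _ => hX i ω, prod_indicator_const_apply, one_pow]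
  simp only [hprod]
  rw [hset, integral_indicator_one
    (S.measurableSet_biInter fun i _ => hmeas i (measurableSet_singleton 1))]

lemma integrable_prod_of_mem_Icc [IsFiniteMeasure μ] (S : Finset ι)
    (hX : ∀ i ∈ S, AEMeasurable (X i) μ) (h01 : ∀ i ∈ S, ∀ᵐ ω ∂μ, X i ω ∈ Set.Icc (0 : ℝ) 1) :
    Integrable (fun ω => ∏ i ∈ S, X i ω) μ := by
  refine .of_mem_Icc 0 1 (S.aemeasurable_fun_prod hX) ?_
  filter_upwards [(Finset.eventually_all S).2 h01] with ω hω
  exact ⟨Finset.prod_nonneg fun i hi => (hω i hi).1,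
    Finset.prod_le_one (fun i hi => (hω i hi).1) fun i hi => (hω i hi).2⟩

variable {p : ι → ℝ} {s : Finset ι}

lemma integral_prod_one_add_mul_le {c : ℝ} (hc : 0 ≤ c)
    (hint : ∀ S ⊆ s, Integrable (fun ω => ∏ i ∈ S, X i ω) μ)
    (hmom : ∀ S ⊆ s, ∫ ω, ∏ i ∈ S, X i ω ∂μ ≤ ∏ i ∈ S, p i) :
    ∫ ω, ∏ i ∈ s, (1 + c * X i ω) ∂μ ≤ ∏ i ∈ s, (1 + c * p i) := by
  simp only [prod_one_add_const_mul]
  rw [integral_finsetSum _ fun S hS => (hint S (Finset.mem_powerset.1 hS)).const_mul _]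
  refine Finset.sum_le_sum fun S hS => ?_
  rw [integral_const_mul]
  exact mul_le_mul_of_nonneg_left (hmom S (Finset.mem_powerset.1 hS)) (pow_nonneg hc _)

lemma integrable_exp_mul_sum_of_mem_Icc [IsFiniteMeasure μ] (t : ℝ)
    (hX : ∀ i ∈ s, AEMeasurable (X i) μ) (h01 : ∀ i ∈ s, ∀ᵐ ω ∂μ, X i ω ∈ Set.Icc (0 : ℝ) 1) :
    Integrable (fun ω => Real.exp (t * ∑ i ∈ s, X i ω)) μ := by
  refine integrable_exp_mul_of_mem_Icc (a := 0) (b := s.card) (s.aemeasurable_fun_sum hX) ?_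
  filter_upwards [(Finset.eventually_all s).2 h01] with ω hω
  exact ⟨Finset.sum_nonneg fun i hi => (hω i hi).1,
    by simpa using Finset.sum_le_card_nsmul s (X · ω) 1 fun i hi => (hω i hi).2⟩

lemma mgf_sum_le_prod_of_integral_prod_le [IsFiniteMeasure μ] {t : ℝ} (ht : 0 ≤ t)
    (hX : ∀ i ∈ s, AEMeasurable (X i) μ) (h01 : ∀ i ∈ s, ∀ᵐ ω ∂μ, X i ω ∈ Set.Icc (0 : ℝ) 1)
    (hmom : ∀ S ⊆ s, ∫ ω, ∏ i ∈ S, X i ω ∂μ ≤ ∏ i ∈ S, p i) :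
    mgf (fun ω => ∑ i ∈ s, X i ω) μ t ≤ ∏ i ∈ s, (1 + (Real.exp t - 1) * p i) := by
  have hint : ∀ S ⊆ s, Integrable (fun ω => ∏ i ∈ S, X i ω) μ := fun S hS =>
    integrable_prod_of_mem_Icc S (fun i hi => hX i (hS hi)) fun i hi => h01 i (hS hi)
  have hint_prod : Integrable (fun ω => ∏ i ∈ s, (1 + (Real.exp t - 1) * X i ω)) μ := by
    simp only [prod_one_add_const_mul]
    exact integrable_finsetSum _ fun S hS => (hint S (Finset.mem_powerset.1 hS)).const_mul _
  have hexp_le : ∀ᵐ ω ∂μ,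
      Real.exp (t * ∑ i ∈ s, X i ω) ≤ ∏ i ∈ s, (1 + (Real.exp t - 1) * X i ω) := by
    filter_upwards [(Finset.eventually_all s).2 h01] with ω hω
    rw [Finset.mul_sum, Real.exp_sum]
    exact Finset.prod_le_prod (fun i _ => (Real.exp_pos _).le) fun i hi =>
      exp_mul_le_one_add_of_mem_Icc t (hω i hi)
  calc mgf (fun ω => ∑ i ∈ s, X i ω) μ t
      ≤ ∫ ω, ∏ i ∈ s, (1 + (Real.exp t - 1) * X i ω) ∂μ :=
        integral_mono_ae (integrable_exp_mul_sum_of_mem_Icc t hX h01) hint_prod hexp_le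
    _ ≤ ∏ i ∈ s, (1 + (Real.exp t - 1) * p i) :=
        integral_prod_one_add_mul_le (sub_nonneg.2 (Real.one_le_exp ht)) hint hmom

end MixedMoments

theorem linial_luria_kl_general {ι Ω : Type*} [Fintype ι] [Nonempty ι] [MeasurableSpace Ω]
    {μ : Measure Ω} [IsFiniteMeasure μ] {X : ι → Ω → ℝ} (hX : ∀ i, AEMeasurable (X i) μ)
    (h01 : ∀ i, ∀ᵐ ω ∂μ, X i ω ∈ Set.Icc (0 : ℝ) 1)
    {α β : ℝ} (hα : 0 < α) (hαβ : α ≤ β) (hβ : β < 1)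
    (hmom : ∀ S : Finset ι, ∫ ω, ∏ i ∈ S, X i ω ∂μ ≤ α ^ S.card) :
    μ.real {ω | β ≤ (1 / Fintype.card ι) * ∑ i, X i ω} ≤
      Real.exp (-(Fintype.card ι : ℝ) * bernoulliKL β α) := by
  have hcard : (0 : ℝ) < Fintype.card ι := Nat.cast_pos.2 Fintype.card_pos
  have ht : 0 ≤ bernoulliTilt β α := bernoulliTilt_nonneg hα hαβ hβ
  have hmgf : mgf (fun ω => ∑ i, X i ω) μ (bernoulliTilt β α) ≤
      (1 + (Real.exp (bernoulliTilt β α) - 1) * α) ^ Fintype.card ι := by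
    simpa using mgf_sum_le_prod_of_integral_prod_le (s := Finset.univ) (p := fun _ => α) ht
      (fun i _ => hX i) (fun i _ => h01 i) fun S _ => by simpa using hmom S
  simp only [one_div, le_inv_mul_iff₀ hcard]
  rw [← exp_neg_bernoulliTilt_mul_mul_pow hα (hαβ.trans_lt hβ) (hα.trans_le hαβ) hβ]
  exact (measure_ge_le_exp_mul_mgf _ ht <|
    integrable_exp_mul_sum_of_mem_Icc _ (fun i _ => hX i) fun i _ => h01 i).trans
      (mul_le_mul_of_nonneg_left hmgf (Real.exp_pos _).le)

/-- Linial–Luria Chernoff-type bound (Kullback–Leibler form): if `X_1,…,X_n` are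
`{0,1}`-valued random variables such that for every subset `S ⊆ [n]` we have
`Pr(∀ i ∈ S, X_i = 1) ≤ α^|S|`, then for every `β` with `α < β < 1`,
`Pr((1/n)·∑ X_i ≥ β) ≤ exp(−n·D(β‖α))`, where
`D(β‖α) = β·ln(β/α) + (1−β)·ln((1−β)/(1−α))`. -/
theorem linial_luria_kl {Ω : Type*} [MeasureSpace Ω]
    [IsProbabilityMeasure (ℙ : Measure Ω)]
    (n : ℕ) (hn : 1 ≤ n) (X : Fin n → Ω → ℝ)
    (hmeas : ∀ i, Measurable (X i))
    (hval : ∀ i ω, X i ω = 0 ∨ X i ω = 1)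
    (α β : ℝ) (hα : 0 < α) (hαβ : α < β) (hβ : β < 1)
    (hmom : ∀ S : Finset (Fin n),
      ℙ {ω | ∀ i ∈ S, X i ω = 1} ≤ ENNReal.ofReal (α ^ S.card)) :
    ℙ {ω | β ≤ (1 / n) * ∑ i, X i ω} ≤
      ENNReal.ofReal (Real.exp (-(n : ℝ) *
        (β * Real.log (β / α) + (1 - β) * Real.log ((1 - β) / (1 - α))))) := by
  have : Nonempty (Fin n) := ⟨⟨0, hn⟩⟩
  have h01 : ∀ i ω, X i ω ∈ Set.Icc (0 : ℝ) 1 := fun i ω => by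
    rcases hval i ω with h | h <;> simp [h]
  have hmoments : ∀ S : Finset (Fin n), ∫ ω, ∏ i ∈ S, X i ω ≤ α ^ S.card := fun S => by
    rw [integral_prod_eq_measureReal_forall_eq_one hmeas hval]
    exact ENNReal.toReal_le_of_le_ofReal (pow_nonneg hα.le _) (hmom S)
  have htail := linial_luria_kl_general (fun i => (hmeas i).aemeasurable)
    (fun i => .of_forall (h01 i)) hα hαβ.le hβ hmoments
  rw [← ofReal_measureReal]
  simpa only [Fintype.card_fin, bernoulliKL] using ENNReal.ofReal_le_ofReal htail
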